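/- Let μ be the Lebesgue measure on [0,1] and p ∈ [1,∞). Then for every k ≥ 2, the set 𝒢_{p,k} is weakly dense in L^p([0,1]). -/

import Mathlib

open MeasureTheory ENNReal Filter Topology

variable {Ω : Type*} [MeasurableSpace Ω]

/-- A measurable function taking at most `k` distinct values. -/
def IsSimpleLE (k : ℕ) (g : Ω → ℝ) : Prop :=
  Measurable g ∧ ∃ s : Finset ℝ, s.card ≤ k ∧ ∀ x, g x ∈ s

/-- The set `𝒢_{p,k}` of elements of `L^p` that agree a.e. with a measurable
function taking at most `k` distinct values. -/
def Gpk (p : ℝ≥0∞) (μ : MeasureTheory.Measure Ω) (k : ℕ) : Set (Lp ℝ p μ) :=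
  {f | ∃ g : Ω → ℝ, IsSimpleLE k g ∧ (f : Ω → ℝ) =ᵐ[μ] g}

lemma greedy_signs {ι E : Type*} [DecidableEq ι] [NormedAddCommGroup E] [InnerProductSpace ℝ E]
    (s : Finset ι) (v : ι → E) (c : ι → ℝ) (M : ℝ) (hc : ∀ i ∈ s, |c i| ≤ M) :
    ∃ e : ι → ℝ, (∀ i, e i = M ∨ e i = -M) ∧
      ‖∑ i ∈ s, (e i - c i) • v i‖ ^ 2 ≤ M ^ 2 * ∑ i ∈ s, ‖v i‖ ^ 2 := by
  induction s using Finset.induction_on with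
  | empty => exact ⟨fun _ => M, fun _ => Or.inl rfl, by simp⟩
  | insert a s ha ih =>
    obtain ⟨e, he, hb⟩ := ih (fun i hi => hc i (Finset.mem_insert_of_mem hi))
    have hca := abs_le.mp (hc a (Finset.mem_insert_self a s))
    set S := ∑ i ∈ s, (e i - c i) • v i with hS
    have key : ∃ d : ℝ, (d = M ∨ d = -M) ∧
        ‖(d - c a) • v a + S‖ ^ 2 ≤ M ^ 2 * ‖v a‖ ^ 2 + ‖S‖ ^ 2 := by
      by_contra! hcon
      have h1 := hcon M (Or.inl rfl)
      have h2 := hcon (-M) (Or.inr rfl)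
      rw [norm_add_sq_real, norm_smul, mul_pow, Real.norm_eq_abs, sq_abs,
        real_inner_smul_left] at h1 h2
      set w := ‖v a‖ ^ 2
      have hw : 0 ≤ w := by positivity
      set z := inner ℝ (v a) S
      have h3 : 0 ≤ M := by linarith
      have h1' : 0 ≤ (M + c a) * ((M - c a) ^ 2 * w + 2 * ((M - c a) * z) - M ^ 2 * w) :=
        mul_nonneg (by linarith) (by linarith)
      have h2' : 0 ≤ (M - c a) * ((-M - c a) ^ 2 * w + 2 * ((-M - c a) * z) - M ^ 2 * w) :=
        mul_nonneg (by linarith) (by linarith)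
      have h4 : 0 ≤ - (2 * M * (c a) ^ 2 * w) := by nlinarith
      rcases h3.eq_or_lt with h0 | h0
      · have : c a = 0 := by linarith
        rw [← h0, this] at h1
        simp at h1
      rcases hca.2.lt_or_eq with h5 | h5
      · have h2'' : 0 < (M - c a) * ((-M - c a) ^ 2 * w + 2 * ((-M - c a) * z) - M ^ 2 * w) :=
          mul_pos (by linarith) (by linarith)
        have : 0 ≤ 2 * M * (c a) ^ 2 * w := by positivity
        nlinarith
      · rw [h5] at h1
        nlinarith [mul_nonneg (sq_nonneg M) hw]
    obtain ⟨d, hd, hdb⟩ := key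
    refine ⟨Function.update e a d, ?_, ?_⟩
    · intro i
      by_cases h : i = a
      · subst h; simpa using hd
      · simpa [h] using he i
    · rw [Finset.sum_insert ha, Finset.sum_insert ha]
      have : ∑ i ∈ s, (Function.update e a d i - c i) • v i = S := by
        refine Finset.sum_congr rfl fun i hi => ?_
        rw [Function.update_of_ne (by rintro rfl; exact ha hi)]
      rw [this, Function.update_self]
      linarith

lemma weakDense_of {E : Type*} [NormedAddCommGroup E] [NormedSpace ℝ E] (D S : Set E)
    (hD : Dense D)
    (h : ∀ x ∈ D, ∀ t : Finset (E →L[ℝ] ℝ), ∀ r > 0, ∃ y ∈ S, ∀ φ ∈ t, |φ (y - x)| < r) :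
    Dense (show Set (WeakSpace ℝ E) from S) := by
  have hsub : (toWeakSpaceCLM ℝ E) '' D ⊆ closure (show Set (WeakSpace ℝ E) from S) := by
    rintro _ ⟨x, hx, rfl⟩
    have hb := (LinearMap.weakBilin_withSeminorms (topDualPairing ℝ E).flip).hasBasis_ball
      (x := (toWeakSpaceCLM ℝ E x : WeakBilin (topDualPairing ℝ E).flip))
    refine (mem_closure_iff_nhds_basis hb).2 ?_
    rintro ⟨t, r⟩ hr
    obtain ⟨y, hy, hyt⟩ := h x hx t r hr
    refine ⟨y, hy, ?_⟩
    refine (Seminorm.mem_ball _).2 (Seminorm.finset_sup_apply_lt hr fun φ hφ => ?_)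
    exact hyt φ hφ
  have hd : Dense ((toWeakSpaceCLM ℝ E) '' D) :=
    (toWeakSpaceCLM_bijective (𝕜 := ℝ) (E := E)).2.denseRange.dense_image
      (toWeakSpaceCLM ℝ E).continuous hD
  exact dense_closure.1 (hd.mono hsub)

section
variable {ι : Type*} {p : ℝ≥0∞} {μ : Measure Ω} [IsProbabilityMeasure μ]

/-- indicator of a fibre of a simple function -/
noncomputable def fibLp (p : ℝ≥0∞) (μ : Measure Ω) [IsProbabilityMeasure μ]
    (F : SimpleFunc Ω ι) (i : ι) : Lp ℝ p μ :=
  indicatorConstLp p (F.measurableSet_fiber i) (measure_ne_top μ _) (1 : ℝ)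

lemma fibLp_sum (F : SimpleFunc Ω ι) (h : ι → ℝ) :
    ((∑ i ∈ F.range, h i • fibLp p μ F i : Lp ℝ p μ) : Ω → ℝ) =ᵐ[μ] fun x => h (F x) := by
  classical
  have h1 := Lp.coeFn_fun_finsetSum F.range (fun i => h i • fibLp p μ F i)
  have h2 : ∀ᵐ x ∂μ, ∀ i ∈ F.range, (h i • fibLp p μ F i : Lp ℝ p μ) x =
      if F x = i then h i else 0 := by
    refine (ae_ball_iff F.range.countable_toSet).2 ?_
    intro i _
    have h3 : (fibLp p μ F i : Ω → ℝ) =ᵐ[μ] (F ⁻¹' {i}).indicator fun _ => (1 : ℝ) :=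
      indicatorConstLp_coeFn
    filter_upwards [Lp.coeFn_smul (h i) (fibLp p μ F i), h3] with x hx hx3
    rw [hx, Pi.smul_apply, hx3]
    by_cases hxi : F x = i <;> simp [Set.indicator, hxi]
  filter_upwards [h1, h2] with x hx1 hx2
  rw [hx1, Finset.sum_congr rfl hx2]
  simp

lemma fibLp_sum_norm [Fact (1 ≤ p)] (F : SimpleFunc Ω ι) (h : ι → ℝ) (hh : ∀ i, |h i| ≤ 1) :
    ‖∑ i ∈ F.range, h i • fibLp p μ F i‖ ≤ 1 := by
  have := Lp.norm_le_of_ae_bound (f := ∑ i ∈ F.range, h i • fibLp p μ F i) (C := 1) zero_le_one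
    (by filter_upwards [fibLp_sum (p := p) (μ := μ) F h] with x hx
        rw [hx]; exact hh _)
  simpa [measureUnivNNReal] using this

lemma fib_sum_abs [Fact (1 ≤ p)] (F : SimpleFunc Ω ι) (φ : Lp ℝ p μ →L[ℝ] ℝ) :
    ∑ i ∈ F.range, |φ (fibLp p μ F i)| ≤ ‖φ‖ := by
  have h1 := φ.le_opNorm
    (∑ i ∈ F.range, (SignType.sign (φ (fibLp p μ F i)) : ℝ) • fibLp p μ F i)
  have h2 := fibLp_sum_norm (p := p) (μ := μ) F
    (fun i => (SignType.sign (φ (fibLp p μ F i)) : ℝ)) (fun i => by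
      rcases lt_trichotomy (φ (fibLp p μ F i)) 0 with h | h | h <;> simp [h])
  rw [map_sum] at h1
  simp only [map_smul, smul_eq_mul, sign_mul_self] at h1
  calc _ ≤ _ := le_abs_self _
    _ ≤ _ := h1
    _ ≤ ‖φ‖ * 1 := by gcongr
    _ = _ := mul_one _

lemma fib_sum_sq [Fact (1 ≤ p)] (F : SimpleFunc Ω ι) (δ : ℝ) 
    (hδ : ∀ i ∈ F.range, ‖fibLp p μ F i‖ ≤ δ)
    (φ : Lp ℝ p μ →L[ℝ] ℝ) :
    ∑ i ∈ F.range, (φ (fibLp p μ F i)) ^ 2 ≤ δ * ‖φ‖ ^ 2 := by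
  rcases F.range.eq_empty_or_nonempty with h0 | ⟨i0, hi0⟩
  · obtain ⟨x⟩ := (inferInstance : NeBot (ae μ)).nonempty
    have := F.mem_range_self x
    simp [h0] at this
  have hδ0 : 0 ≤ δ := (norm_nonneg _).trans (hδ i0 hi0)
  calc _ ≤ ∑ i ∈ F.range, (‖φ‖ * δ) * |φ (fibLp p μ F i)| := by
        refine Finset.sum_le_sum fun i hi => ?_
        rw [← sq_abs, sq]
        gcongr
        exact (φ.le_opNorm _).trans (by gcongr; exact hδ i hi)
    _ = (‖φ‖ * δ) * ∑ i ∈ F.range, |φ (fibLp p μ F i)| := by rw [Finset.mul_sum]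
    _ ≤ (‖φ‖ * δ) * ‖φ‖ := by gcongr; exact fib_sum_abs F φ
    _ = _ := by ring

lemma approx_signs [Fact (1 ≤ p)] (F : SimpleFunc Ω ι) (δ : ℝ)
    (hδ : ∀ i ∈ F.range, ‖fibLp p μ F i‖ ≤ δ) (c : ι → ℝ) (M : ℝ) (hc : ∀ i ∈ F.range, |c i| ≤ M)
    (t : Finset (Lp ℝ p μ →L[ℝ] ℝ)) :
    ∃ e : ι → ℝ, (∀ i, e i = M ∨ e i = -M) ∧ ∀ φ ∈ t,
      (φ (∑ i ∈ F.range, (e i - c i) • fibLp p μ F i)) ^ 2 ≤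
        M ^ 2 * (δ * ∑ ψ ∈ t, ‖ψ‖ ^ 2) := by
  classical
  let v : ι → EuclideanSpace ℝ t := fun i => WithLp.toLp 2 fun φ => φ.1 (fibLp p μ F i)
  obtain ⟨e, he, hb⟩ := greedy_signs F.range v c M hc
  refine ⟨e, he, fun φ hφ => ?_⟩
  have h1 : φ (∑ i ∈ F.range, (e i - c i) • fibLp p μ F i) =
      (∑ i ∈ F.range, (e i - c i) • v i) ⟨φ, hφ⟩ := by
    simp [v]
  have h2 := PiLp.norm_apply_le (∑ i ∈ F.range, (e i - c i) • v i) ⟨φ, hφ⟩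
  rw [h1, ← sq_abs]
  calc _ ≤ ‖∑ i ∈ F.range, (e i - c i) • v i‖ ^ 2 := by
        gcongr; exact h2
    _ ≤ _ := hb
    _ ≤ _ := by
      gcongr
      simp only [EuclideanSpace.norm_sq_eq, v, Real.norm_eq_abs, sq_abs]
      rw [Finset.sum_comm, Finset.mul_sum, ← Finset.sum_coe_sort t]
      exact Finset.sum_le_sum fun φ _ => fib_sum_sq F δ hδ φ.1

end

/-- the grid simple function -/
noncomputable def gridFn (N : ℕ) : SimpleFunc ℝ ℕ where
  toFun x := min ⌊(N : ℝ) * x⌋₊ N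
  measurableSet_fiber' j := by
    have : Measurable (fun x : ℝ => min ⌊(N : ℝ) * x⌋₊ N) :=
      (Nat.measurable_floor.comp (measurable_const.mul measurable_id)).min measurable_const
    exact this (measurableSet_singleton j)
  finite_range' := (Set.finite_Iic N).subset (by rintro _ ⟨x, rfl⟩; exact min_le_right ⌊(N : ℝ) * x⌋₊ N)

lemma grid_measure (N : ℕ) (hN : 0 < N) (j : ℕ) :
    (volume.restrict (Set.Icc (0:ℝ) 1)).real (gridFn N ⁻¹' {j}) ≤ 1 / N := by
  have hN' : (0 : ℝ) < N := by exact_mod_cast hN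
  rw [measureReal_restrict_apply ((gridFn N).measurableSet_fiber j)]
  have hsub : gridFn N ⁻¹' {j} ∩ Set.Icc (0:ℝ) 1 ⊆ Set.Icc ((j : ℝ) / N) ((j + 1 : ℝ) / N) := by
    rintro x ⟨hx, hx0, hx1⟩
    have hx' : min ⌊(N : ℝ) * x⌋₊ N = j := hx
    have h1 : ⌊(N : ℝ) * x⌋₊ ≤ N := by
      apply Nat.floor_le_of_le; nlinarith
    rw [min_eq_left h1] at hx'
    have h2 := (Nat.floor_eq_iff (by positivity)).1 hx'
    constructor
    · rw [div_le_iff₀ hN']; linarith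
    · rw [le_div_iff₀ hN']; linarith
  calc _ ≤ volume.real (Set.Icc ((j : ℝ) / N) ((j + 1 : ℝ) / N)) :=
        measureReal_mono hsub (by simp)
    _ = (j + 1 : ℝ) / N - (j : ℝ) / N := by
      rw [Real.volume_real_Icc_of_le]; gcongr; linarith
    _ = _ := by ring
    _ ≤ _ := le_rfl

theorem Gpk_weaklyDense_Icc (p : ℝ≥0∞) [Fact (1 ≤ p)] (hp : p ≠ ∞) (k : ℕ) (hk : 2 ≤ k) :
    Dense (show Set (WeakSpace ℝ (Lp ℝ p (volume.restrict (Set.Icc (0:ℝ) 1)))) from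
      Gpk p (volume.restrict (Set.Icc (0:ℝ) 1)) k) := by
  have : IsProbabilityMeasure (volume.restrict (Set.Icc (0:ℝ) 1)) := ⟨by simp⟩
  set μ := volume.restrict (Set.Icc (0:ℝ) 1) with hμ
  refine weakDense_of _ _ (Lp.simpleFunc.dense hp) ?_
  intro f hf t r hr
  let f' : Lp.simpleFunc ℝ p μ := ⟨f, hf⟩
  let G := Lp.simpleFunc.toSimpleFunc f'
  have hG : G =ᵐ[μ] (f : ℝ → ℝ) := Lp.simpleFunc.toSimpleFunc_eq_toFun f'
  obtain ⟨M, hM⟩ := G.exists_forall_norm_le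
  have hp0 : 0 < p.toReal :=
    ENNReal.toReal_pos (zero_lt_one.trans_le Fact.out).ne' hp
  have hlim : Tendsto (fun N : ℕ => M ^ 2 * ((1 / (N : ℝ)) ^ (1 / p.toReal) * ∑ ψ ∈ t, ‖ψ‖ ^ 2))
      atTop (𝓝 0) := by
    have h1 : Tendsto (fun N : ℕ => (1 / (N : ℝ)) ^ (1 / p.toReal)) atTop (𝓝 0) := by
      have := (tendsto_one_div_atTop_nhds_zero_nat (𝕜 := ℝ)).rpow_const
        (p := 1 / p.toReal) (Or.inr (by positivity))
      rwa [Real.zero_rpow (by positivity)] at this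
    simpa using (h1.mul_const (∑ ψ ∈ t, ‖ψ‖ ^ 2)).const_mul (M ^ 2)
  obtain ⟨N, hNr, hN⟩ := ((hlim.eventually_lt_const (show 0 < r ^ 2 by positivity)).and
    (eventually_gt_atTop 0)).exists
  let F := G.pair (gridFn N)
  have hδ : ∀ i ∈ F.range, ‖fibLp p μ F i‖ ≤ (1 / (N : ℝ)) ^ (1 / p.toReal) := by
    intro i _
    refine (norm_indicatorConstLp_le).trans ?_
    rw [norm_one, one_mul]
    refine Real.rpow_le_rpow measureReal_nonneg ?_ (by positivity)
    refine le_trans (measureReal_mono ?_) (grid_measure N hN i.2)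
    intro x hx
    have : F x = i := hx
    rw [← this]
    rfl
  obtain ⟨e, he, hφ⟩ := approx_signs F _ hδ Prod.fst M (by
    intro i hi
    obtain ⟨x, rfl⟩ := SimpleFunc.mem_range.1 hi
    exact hM x) t
  have hfeq : f = ∑ i ∈ F.range, i.1 • fibLp p μ F i := by
    refine Lp.ext ?_
    filter_upwards [hG, fibLp_sum (p := p) (μ := μ) F Prod.fst] with x h1 h2
    rw [h2, ← h1]
    rfl
  refine ⟨∑ i ∈ F.range, e i • fibLp p μ F i, ⟨F.map e, ⟨(F.map e).measurable, {M, -M},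
    Finset.card_le_two.trans hk, fun x => ?_⟩, fibLp_sum F e⟩, fun φ hφt => ?_⟩
  · simpa using he (F x)
  · have h1 := hφ φ hφt
    have h2 : (∑ i ∈ F.range, e i • fibLp p μ F i) - f =
        ∑ i ∈ F.range, (e i - i.1) • fibLp p μ F i := by
      conv_lhs => rw [hfeq]
      simp only [sub_smul, Finset.sum_sub_distrib]
    rw [h2]
    exact abs_lt_of_sq_lt_sq (h1.trans_lt hNr) hr.le
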